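/- arXiv:1502.03065 — 2 statements merged into one kernel-verified Lean document; each statement's English description precedes it below -/
import Mathlib

section
/- Let A be a finite alphabet. In the incidence algebra I(A*) over ℚ, define P(u,v) = binom(v,u) and H(u,v) = binom(v,u) if |v| = |u|+1, else 0. Then P = e^H entrywise; that is, for all words u ≤ v, ∑_{ℓ=0}^{|v|−|u|} (1/ℓ!) · H^ℓ(u,v) = binom(v,u), where H^0 = δ is the identity of the incidence algebra. (All higher powers H^ℓ(u,v) with ℓ > |v|−|u| vanish, so the exponential is a finite sum on each interval.) -/
/-- `subwordCount v u` is the number of occurrences of `u` as a (scattered) subword of `v`,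
i.e. the number of strictly increasing maps `φ` from the positions of `u` to the positions of
`v` matching the letters. -/
def subwordCount {A : Type*} [DecidableEq A] (v u : List A) : ℕ :=
  ((Finset.univ : Finset (Fin u.length → Fin v.length)).filter
    (fun φ => (∀ i j : Fin u.length, i < j → φ i < φ j) ∧
      ∀ i : Fin u.length, u.get i = v.get (φ i))).card

/-- The identity `δ` of the incidence algebra `I(A*)` over `ℚ`. -/
def deltaW {A : Type*} [DecidableEq A] (u v : List A) : ℚ := if u = v then 1 else 0

/-- Convolution in the incidence algebra `I(A*)` of words under the subword order:
`(FG)(u,v) = ∑_{u ≤ z ≤ v} F(u,z)·G(z,v)`.  The words `z` with `u ≤ z ≤ v` are exactly the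
sublists `z` of `v` with `subwordCount z u > 0`. -/
def convW {A : Type*} [DecidableEq A] (F G : List A → List A → ℚ) (u v : List A) : ℚ :=
  ∑ z ∈ v.sublists.toFinset.filter (fun z => 0 < subwordCount z u), F u z * G z v

/-- Convolution powers, with `F ^ 0 = δ`. -/
def convPowW {A : Type*} [DecidableEq A] (F : List A → List A → ℚ) :
    ℕ → List A → List A → ℚ
  | 0 => deltaW
  | ℓ + 1 => convW F (convPowW F ℓ)

/-- The element `H` of `I(A*)`: `H(u,v) = binom(v,u)` if `|v| = |u| + 1`, else `0`. -/
def HW {A : Type*} [DecidableEq A] (u v : List A) : ℚ :=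
  if v.length = u.length + 1 then (subwordCount v u : ℚ) else 0

/-- Generic version of the occurrence finset. -/
def occG {A : Type*} [DecidableEq A] {k n : ℕ} (x : Fin k → A) (y : Fin n → A) :
    Finset (Fin k → Fin n) :=
  (Finset.univ : Finset (Fin k → Fin n)).filter
    (fun φ => (∀ i j : Fin k, i < j → φ i < φ j) ∧ ∀ i : Fin k, x i = y (φ i))

theorem occG_card_succ {A : Type*} [DecidableEq A] {k n : ℕ} (x : Fin (k+1) → A)
    (y : Fin (n+1) → A) :
    (occG x y).card = (occG x (fun i : Fin n => y i.succ)).card +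
      if x 0 = y 0 then (occG (fun i : Fin k => x i.succ) (fun i : Fin n => y i.succ)).card
      else 0 := by
  classical
  rw [← Finset.card_filter_add_card_filter_not (s := occG x y) (fun φ => φ 0 ≠ 0)]
  congr 1
  · symm
    apply Finset.card_bij (fun φ _ => fun i => (φ i).succ)
    · intro φ hφ
      simp only [occG, Finset.mem_filter, Finset.mem_univ, true_and] at hφ ⊢
      exact ⟨⟨fun i j hij => Fin.succ_lt_succ_iff.2 (hφ.1 i j hij), hφ.2⟩, Fin.succ_ne_zero _⟩
    · intro φ _ ψ _ h
      funext i
      exact Fin.succ_injective _ (congrFun h i)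
    · intro φ hφ
      simp only [occG, Finset.mem_filter, Finset.mem_univ, true_and] at hφ
      obtain ⟨⟨h1, h2⟩, h3⟩ := hφ
      have h4 : ∀ i, φ i ≠ 0 := by
        intro i
        rcases Fin.eq_zero_or_eq_succ i with rfl | ⟨j, rfl⟩
        · exact h3
        · exact Fin.ne_zero_of_lt (h1 0 j.succ (Fin.succ_pos j))
      refine ⟨fun i => (φ i).pred (h4 i), ?_, ?_⟩
      · simp only [occG, Finset.mem_filter, Finset.mem_univ, true_and]
        refine ⟨fun i j hij => Fin.pred_lt_pred_iff.2 (h1 i j hij), fun i => ?_⟩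
        simpa using h2 i
      · funext i; simp
  · split_ifs with hxy
    · symm
      apply Finset.card_bij
        (fun φ _ => (Fin.cons 0 (fun i => (φ i).succ) : Fin (k+1) → Fin (n+1)))
      · intro φ hφ
        simp only [occG, Finset.mem_filter, Finset.mem_univ, true_and] at hφ ⊢
        refine ⟨⟨?_, ?_⟩, by simp⟩
        · intro i j hij
          induction j using Fin.cases with
          | zero => exact absurd hij (Fin.not_lt_zero _)
          | succ j =>
            induction i using Fin.cases with
            | zero => simp
            | succ i => simpa using hφ.1 i j (Fin.succ_lt_succ_iff.1 hij)
        · intro i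
          induction i using Fin.cases with
          | zero => simpa using hxy
          | succ i => simpa using hφ.2 i
      · intro φ _ ψ _ h
        funext i
        have := congrFun h i.succ
        simpa using this
      · intro φ hφ
        simp only [occG, Finset.mem_filter, Finset.mem_univ, true_and, not_not] at hφ
        obtain ⟨⟨h1, h2⟩, h3⟩ := hφ
        have h4 : ∀ i : Fin k, φ i.succ ≠ 0 := fun j =>
          Fin.ne_zero_of_lt (h1 0 j.succ (Fin.succ_pos j))
        refine ⟨fun i => (φ i.succ).pred (h4 i), ?_, ?_⟩
        · simp only [occG, Finset.mem_filter, Finset.mem_univ, true_and]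
          refine ⟨fun i j hij => Fin.pred_lt_pred_iff.2 (h1 _ _ (Fin.succ_lt_succ_iff.2 hij)),
            fun i => ?_⟩
          simpa using h2 i.succ
        · funext i
          induction i using Fin.cases with
          | zero => simp [h3]
          | succ i => simp
    · rw [Finset.card_eq_zero, Finset.filter_eq_empty_iff]
      intro φ hφ h0
      simp only [occG, Finset.mem_filter, Finset.mem_univ, true_and, not_not] at hφ h0
      apply hxy
      have := hφ.2 0
      rwa [h0] at this

theorem subwordCount_nil_right {A : Type*} [DecidableEq A] (v : List A) :
    subwordCount v [] = 1 := by
  unfold subwordCount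
  rw [Finset.filter_true_of_mem]
  · simp
  · intro φ _
    exact ⟨fun i => i.elim0, fun i => i.elim0⟩

theorem subwordCount_nil_cons {A : Type*} [DecidableEq A] (a : A) (u : List A) :
    subwordCount [] (a :: u) = 0 := by
  unfold subwordCount
  rw [Finset.card_eq_zero, Finset.filter_eq_empty_iff]
  intro φ _
  exact (φ ⟨0, by simp⟩).elim0

theorem subwordCount_cons_cons {A : Type*} [DecidableEq A] (b : A) (v : List A) (a : A)
    (u : List A) :
    subwordCount (b :: v) (a :: u) = subwordCount v (a :: u) +
      if a = b then subwordCount v u else 0 :=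
  occG_card_succ (k := u.length) (n := v.length) (a :: u).get (b :: v).get

theorem count_map_cons {A : Type*} [DecidableEq A] (b a : A) (u : List A) (L : List (List A)) :
    (L.map (List.cons b)).count (a :: u) = if a = b then L.count u else 0 := by
  induction L with
  | nil => simp
  | cons z L ih =>
    rw [List.map_cons, List.count_cons, ih, List.count_cons]
    by_cases h : a = b
    · subst h; simp
    · have : ¬ b = a := fun h' => h h'.symm
      simp [h, this]

theorem count_map_cons_nil {A : Type*} [DecidableEq A] (b : A) (L : List (List A)) :
    (L.map (List.cons b)).count [] = 0 := by
  rw [List.count_eq_zero]; simp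

theorem subwordCount_eq_count {A : Type*} [DecidableEq A] (v u : List A) :
    subwordCount v u = v.sublists'.count u := by
  induction v generalizing u with
  | nil =>
    cases u with
    | nil => rw [subwordCount_nil_right]; simp
    | cons a u => rw [subwordCount_nil_cons]; simp
  | cons b v ih =>
    rw [List.sublists'_cons, List.count_append]
    cases u with
    | nil => rw [count_map_cons_nil, ← ih, subwordCount_nil_right, subwordCount_nil_right]
    | cons a u => rw [count_map_cons, subwordCount_cons_cons, ih, ih]

theorem subwordCount_eq_zero {A : Type*} [DecidableEq A] (v u : List A)
    (h : v.length < u.length) : subwordCount v u = 0 := by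
  rw [subwordCount_eq_count, List.count_eq_zero, List.mem_sublists']
  intro hs
  have := hs.length_le
  omega

theorem subwordCount_same {A : Type*} [DecidableEq A] (v u : List A)
    (h : v.length = u.length) : subwordCount v u = if v = u then 1 else 0 := by
  induction v generalizing u with
  | nil =>
    cases u with
    | nil => simp [subwordCount_nil_right]
    | cons a u => simp at h
  | cons b v ih =>
    cases u with
    | nil => simp at h
    | cons a u =>
      simp only [List.length_cons, add_left_inj] at h
      rw [subwordCount_cons_cons, subwordCount_eq_zero _ _ (by simp [h]), ih u h]
      by_cases h1 : a = b
      · subst h1; simp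
      · have : ¬ b = a := fun h' => h1 h'.symm
        simp [h1, this]

/-- Sum over all occurrences of subwords. -/
def TW {A : Type*} [DecidableEq A] (v u : List A) : ℕ :=
  (v.sublists'.map (fun z => if z.length = u.length + 1 then subwordCount z u else 0)).sum

theorem sum_ite_eq_count {A : Type*} [DecidableEq A] (u : List A) (L : List (List A)) :
    (L.map (fun z => if z = u then 1 else 0)).sum = L.count u := by
  induction L with
  | nil => simp
  | cons z L ih => rw [List.map_cons, List.sum_cons, ih, List.count_cons]; simp [add_comm]

theorem TW_eq {A : Type*} [DecidableEq A] (v u : List A) :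
    TW v u + u.length * subwordCount v u = v.length * subwordCount v u := by
  induction v generalizing u with
  | nil =>
    cases u with
    | nil => simp [TW]
    | cons a u => simp [TW, subwordCount_nil_cons]
  | cons b v ih =>
    have hT : TW (b :: v) u = TW v u + (v.sublists'.map (fun z =>
        if z.length = u.length then subwordCount (b :: z) u else 0)).sum := by
      simp only [TW, List.sublists'_cons, List.map_append, List.sum_append, List.map_map]
      congr 2
      apply List.map_congr_left
      intro z _
      simp
    rw [hT]
    cases u with
    | nil =>
      have h2 : (v.sublists'.map (fun z =>
          if z.length = ([] : List A).length then subwordCount (b :: z) [] else 0)).sum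
          = subwordCount v [] := by
        rw [subwordCount_eq_count, ← sum_ite_eq_count]
        congr 1
        apply List.map_congr_left
        intro z _
        simp [subwordCount_nil_right]
      rw [h2]
      have := ih []
      simp only [subwordCount_nil_right, List.length_cons, List.length_nil] at this ⊢
      omega
    | cons a u =>
      have h2 : (v.sublists'.map (fun z =>
          if z.length = (a :: u).length then subwordCount (b :: z) (a :: u) else 0)).sum
          = subwordCount v (a :: u) + if a = b then TW v u else 0 := by
        rw [subwordCount_eq_count v, ← sum_ite_eq_count]
        have : (if a = b then TW v u else 0) = (v.sublists'.map (fun z => if a = b then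
            (if z.length = u.length + 1 then subwordCount z u else 0) else 0)).sum := by
          split_ifs
          · rfl
          · simp
        rw [this, ← List.sum_map_add]
        congr 1
        apply List.map_congr_left
        intro z _
        by_cases hz : z.length = (a :: u).length
        · rw [if_pos hz, subwordCount_cons_cons, subwordCount_same _ _ hz]
          rw [List.length_cons] at hz
          simp [hz]
        · have hz' : ¬ z = a :: u := fun h => hz (by rw [h])
          rw [if_neg hz, if_neg hz']
          rw [List.length_cons] at hz
          simp [hz]
      rw [h2, subwordCount_cons_cons]
      have h3 := ih (a :: u)
      have h4 := ih u
      simp only [List.length_cons] at h3 ⊢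
      split_ifs <;> nlinarith

theorem TW_eq_sum {A : Type*} [DecidableEq A] (v u : List A) :
    (TW v u : ℚ) = ∑ z ∈ v.sublists.toFinset, HW u z * subwordCount v z := by
  have : v.sublists.toFinset = v.sublists'.toFinset := by
    ext z; simp
  rw [this, TW, Finset.sum_list_map_count]
  push_cast
  apply Finset.sum_congr rfl
  intro z _
  rw [subwordCount_eq_count v z, HW, nsmul_eq_mul, mul_comm]
  push_cast
  congr!

theorem convPowW_HW {A : Type*} [DecidableEq A] (ℓ : ℕ) (u v : List A) :
    convPowW HW ℓ u v =
      if v.length = u.length + ℓ then (ℓ.factorial : ℚ) * subwordCount v u else 0 := by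
  induction ℓ generalizing u with
  | zero =>
    simp only [convPowW, deltaW]
    by_cases h : v.length = u.length
    · rw [subwordCount_same _ _ h]; simp [h, eq_comm]
    · have : ¬ u = v := fun h' => h (by rw [h'])
      simp [h, this]
  | succ ℓ ih =>
    simp only [convPowW, convW]
    rw [Finset.sum_filter_of_ne]
    · split_ifs with h
      · have h1 : ∀ z ∈ v.sublists.toFinset, HW u z * convPowW HW ℓ z v =
            ℓ.factorial * (HW u z * subwordCount v z) := by
          intro z _
          rw [ih]
          by_cases hz : z.length = u.length + 1
          · rw [if_pos (by omega)]; ring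
          · simp [HW, hz]
        rw [Finset.sum_congr rfl h1, ← Finset.mul_sum, ← TW_eq_sum]
        have h2 := TW_eq v u
        have h3 : TW v u = (ℓ + 1) * subwordCount v u := by
          rw [h] at h2; nlinarith
        rw [h3, Nat.factorial_succ]
        push_cast
        ring
      · apply Finset.sum_eq_zero
        intro z _
        rw [ih]
        by_cases hz : z.length = u.length + 1
        · rw [if_neg (by omega)]; simp
        · simp [HW, hz]
    · intro z _ hne
      rw [Nat.pos_iff_ne_zero]
      intro h0
      apply hne
      simp [HW, h0]

/-- Theorem (`P = e^H` in `I(A*)`): for all words `u ≤ v`,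
`∑_{ℓ=0}^{|v|−|u|} (1/ℓ!) · H^ℓ(u,v) = binom(v,u)`. -/
theorem P_eq_exp_HW {A : Type*} [Fintype A] [DecidableEq A] (u v : List A)
    (h : 0 < subwordCount v u) :
    ∑ ℓ ∈ Finset.range (v.length - u.length + 1),
        (1 / (Nat.factorial ℓ : ℚ)) * convPowW HW ℓ u v = subwordCount v u := by
  have hle : u.length ≤ v.length := by
    by_contra hc
    rw [subwordCount_eq_zero _ _ (by omega)] at h
    exact absurd h (lt_irrefl _)
  rw [Finset.sum_eq_single (v.length - u.length)]
  · rw [convPowW_HW, if_pos (by omega)]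
    have : ((v.length - u.length).factorial : ℚ) ≠ 0 := by
      exact_mod_cast Nat.factorial_ne_zero _
    field_simp
  · intro ℓ _ hne
    rw [convPowW_HW, if_neg (by omega), mul_zero]
  · intro hn
    simp at hn
end

section
/- Let A be a finite alphabet, let P be the element of the incidence algebra I(A*) over ℚ defined by P(u,v) = binom(v,u), and for a nonzero rational number d let D_d be defined by D_d(u,v) = d^{|u|} · δ(u,v). Then for every positive natural number d, P^d = D_{1/d} · P · D_d in I(A*); in particular, with D_{−1}(u,v) = (−1)^{|u|} δ(u,v), the inverse of P equals D_{−1} · P · D_{−1}. -/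
/-- The element `P` of `I(A*)`: `P(u,v) = binom(v,u)`. -/
def PW {A : Type*} [DecidableEq A] (u v : List A) : ℚ := subwordCount v u

/-- The diagonal element `D_q` of `I(A*)`: `D_q(u,v) = q^{|u|} · δ(u,v)`. -/
def DW {A : Type*} [DecidableEq A] (q : ℚ) (u v : List A) : ℚ := q ^ u.length * deltaW u v

section helpers
variable {A : Type*} [DecidableEq A]

def TT (q : ℚ) : List A → List A → ℚ
  | [], [] => 1
  | _ :: _, [] => 0
  | [], _ :: v => q * TT q [] v
  | a :: u, x :: v => q * TT q (a :: u) v + if a = x then TT q u v else 0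

lemma swc_nil (v : List A) : subwordCount v [] = 1 := by
  unfold subwordCount
  rw [Finset.card_eq_one]
  refine ⟨fun i => i.elim0, ?_⟩
  ext φ
  simp only [Finset.mem_filter, Finset.mem_univ, true_and, Finset.mem_singleton]
  constructor
  · intro _
    funext i
    exact i.elim0
  · intro _
    exact ⟨fun i => i.elim0, fun i => i.elim0⟩

lemma swc_nil_cons (a : A) (u : List A) : subwordCount [] (a :: u) = 0 := by
  unfold subwordCount
  rw [Finset.card_eq_zero]
  ext φ
  exact (φ ⟨0, by simp⟩).elim0

lemma swc_cons (a x : A) (u v : List A) : subwordCount (x :: v) (a :: u) =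
    subwordCount v (a :: u) + if a = x then subwordCount v u else 0 := by
  unfold subwordCount
  have e : (if a = x then ((Finset.univ : Finset (Fin u.length → Fin v.length)).filter
    (fun φ => (∀ i j : Fin u.length, i < j → φ i < φ j) ∧
      ∀ i : Fin u.length, u.get i = v.get (φ i))).card else 0) =
      ((Finset.univ : Finset (Fin u.length → Fin v.length)).filter
    (fun φ => a = x ∧ (∀ i j : Fin u.length, i < j → φ i < φ j) ∧
      ∀ i : Fin u.length, u.get i = v.get (φ i))).card := by
    split_ifs with h <;> simp [h]
  rw [e]
  let f1 : (Fin (u.length+1) → Fin v.length) → (Fin (u.length+1) → Fin (v.length+1)) :=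
    fun ψ i => (ψ i).succ
  let f2 : (Fin u.length → Fin v.length) → (Fin (u.length+1) → Fin (v.length+1)) :=
    fun ψ => Fin.cons 0 (fun i => (ψ i).succ)
  have i1 : Function.Injective f1 := by
    intro p q h
    funext i
    exact Fin.succ_injective _ (congrFun h i)
  have i2 : Function.Injective f2 := by
    intro p q h
    funext i
    have := congrFun h i.succ
    simpa [f2] using this
  rw [← Finset.card_image_of_injective _ i1, ← Finset.card_image_of_injective _ i2]
  rw [← Finset.card_union_of_disjoint]
  · congr 1
    ext φ
    simp only [Finset.mem_filter, Finset.mem_univ, true_and, Finset.mem_union, Finset.mem_image]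
    change Fin (u.length+1) → Fin (v.length+1) at φ
    constructor
    · rintro ⟨hm, hl⟩
      change ∀ i j : Fin (u.length+1), i < j → φ i < φ j at hm
      change ∀ i : Fin (u.length+1), _ at hl
      by_cases h0 : φ 0 = 0
      · right
        have hp : ∀ i : Fin u.length, φ i.succ ≠ 0 := by
          intro i hi
          have := hm 0 i.succ (Fin.succ_pos i)
          rw [hi] at this
          exact absurd this (Fin.not_lt_zero _)
        refine ⟨fun i => (φ i.succ).pred (hp i), ⟨?_, ?_, ?_⟩, ?_⟩
        · have := hl 0
          rw [h0] at this
          simpa using this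
        · intro i j hij
          exact Fin.pred_lt_pred_iff.2 (hm _ _ (Fin.succ_lt_succ_iff.2 hij))
        · intro i
          have := hl i.succ
          obtain ⟨k, hk⟩ := Fin.exists_succ_eq.2 (hp i)
          simp only [← hk] at this ⊢
          simpa using this
        · funext i
          refine Fin.cases ?_ (fun i => ?_) i
          · simp [f2, h0]
          · simp [f2]
      · left
        have hp : ∀ i : Fin (u.length+1), φ i ≠ 0 := by
          intro i hi
          rcases Fin.eq_zero_or_eq_succ i with rfl | ⟨j, rfl⟩
          · exact h0 hi
          have := hm 0 j.succ (Fin.succ_pos j)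
          rw [hi] at this
          exact absurd this (Fin.not_lt_zero _)
        refine ⟨fun i => (φ i).pred (hp i), ⟨?_, ?_⟩, ?_⟩
        · intro i j hij
          exact Fin.pred_lt_pred_iff.2 (hm _ _ hij)
        · intro i
          have := hl i
          obtain ⟨k, hk⟩ := Fin.exists_succ_eq.2 (hp i)
          simp only [← hk] at this ⊢
          simpa using this
        · funext i
          simp [f1]
    · rintro (⟨ψ, ⟨hm, hl⟩, rfl⟩ | ⟨ψ, ⟨hx, hm, hl⟩, rfl⟩)
      · exact ⟨fun i j hij => Fin.succ_lt_succ_iff.2 (hm i j hij), fun i => hl i⟩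
      · constructor
        · change ∀ i j : Fin (u.length+1), i < j → f2 ψ i < f2 ψ j
          intro i j
          refine Fin.cases ?_ (fun j => ?_) j
          · intro h
            exact absurd h (Fin.not_lt_zero _)
          · refine Fin.cases ?_ (fun i => ?_) i
            · intro _
              simp [f2]
            · intro h
              have := hm i j (Fin.succ_lt_succ_iff.1 h)
              simpa [f2] using this
        · change ∀ i : Fin (u.length+1), (a :: u).get i = (x :: v).get (f2 ψ i)
          intro i
          refine Fin.cases ?_ (fun i => ?_) i
          · simpa [f2] using hx
          · simpa [f2] using hl i
  · rw [Finset.disjoint_left]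
    intro φ h1 h2
    simp only [Finset.mem_image] at h1 h2
    obtain ⟨p, _, rfl⟩ := h1
    obtain ⟨r, _, h⟩ := h2
    have := congrFun h 0
    simp [f1, f2] at this
    exact absurd this.symm (Fin.succ_ne_zero _)

lemma PW_eq (u v : List A) : PW u v = TT 1 u v := by
  unfold PW
  induction v generalizing u with
  | nil => cases u <;> simp [swc_nil, swc_nil_cons, TT]
  | cons x v ih =>
    cases u with
    | nil => simp [TT, ← ih, swc_nil]
    | cons a u =>
      simp only [TT, ← ih, swc_cons]
      split_ifs <;> simp

lemma TT_zero (u v : List A) : TT 0 u v = deltaW u v := by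
  unfold deltaW
  induction v generalizing u with
  | nil => cases u <;> simp [TT]
  | cons x v ih =>
    cases u with
    | nil => simp [TT]
    | cons a u =>
      simp only [TT, ih, List.cons.injEq]
      split_ifs <;> simp_all

lemma TT_scale (q : ℚ) (u v : List A) : q ^ u.length * TT q u v = q ^ v.length * TT 1 u v := by
  induction v generalizing u with
  | nil => cases u <;> simp [TT]
  | cons x v ih =>
    cases u with
    | nil =>
      have := ih []
      simp only [TT, List.length_cons, pow_succ, List.length_nil] at *
      linear_combination q * this
    | cons a u =>
      have h1 := ih (a :: u)
      have h2 := ih u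
      simp only [TT, List.length_cons, pow_succ] at *
      split_ifs
      · linear_combination q * h1 + q * h2
      · linear_combination q * h1

lemma TT_not (q : ℚ) (u v : List A) (h : ¬ u.Sublist v) : TT q u v = 0 := by
  induction v generalizing u with
  | nil => cases u <;> simp_all [TT]
  | cons x v ih =>
    cases u with
    | nil => simp at h
    | cons a u =>
      have h1 : ¬ (a :: u).Sublist v := fun h' => h (h'.cons x)
      simp only [TT, ih _ h1]
      split_ifs with hx
      · subst hx
        rw [ih u (fun h' => h (h'.cons_cons a))]
        simp
      · simp

lemma swc_pos (u v : List A) : 0 < subwordCount v u ↔ u.Sublist v := by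
  constructor
  · intro h
    by_contra h'
    have := TT_not 1 u v h'
    rw [← PW_eq] at this
    unfold PW at this
    have : subwordCount v u = 0 := by exact_mod_cast this
    omega
  · intro h
    induction h with
    | slnil => simp [swc_nil]
    | @cons u v x h ih =>
      cases u with
      | nil => simp [swc_nil]
      | cons a u => rw [swc_cons]; omega
    | cons_cons a h ih => rw [swc_cons]; simp; omega

lemma conv_eq (F G : List A → List A → ℚ) (hF : ∀ u v, ¬ u.Sublist v → F u v = 0) (u v : List A) :
    convW F G u v = ∑ z ∈ v.sublists.toFinset, F u z * G z v := by
  unfold convW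
  refine Finset.sum_subset (Finset.filter_subset _ _) ?_
  intro z hz hn
  have : ¬ u.Sublist z := fun h => hn (by simp [swc_pos, h] at hz ⊢; exact hz)
  rw [hF _ _ this, zero_mul]

lemma sum_cons (f : List A → ℚ) (q : ℚ) (x : A) (v : List A) :
    ∑ z ∈ (x :: v).sublists.toFinset, f z * TT q z (x :: v) =
    q * ∑ z ∈ v.sublists.toFinset, f z * TT q z v +
      ∑ z ∈ v.sublists.toFinset, f (x :: z) * TT q z v := by
  let g : List A → ℚ := fun z => match z with
    | [] => 0
    | a :: z => if a = x then TT q z v else 0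
  have hg : ∀ z, TT q z (x :: v) = q * TT q z v + g z := by
    intro z
    cases z <;> simp [TT, g]
  simp only [hg, mul_add, Finset.sum_add_distrib]
  congr 1
  · rw [Finset.mul_sum]
    symm
    refine (Finset.sum_subset ?_ ?_).trans (Finset.sum_congr rfl fun z _ => mul_left_comm _ _ _)
    · intro z hz
      simp only [List.mem_toFinset, List.mem_sublists] at *
      exact hz.cons x
    · intro z _ hz
      simp only [List.mem_toFinset, List.mem_sublists] at hz
      rw [TT_not q _ _ hz]
      simp
  · have hi : Function.Injective (List.cons x) := List.cons_injective
    have : ∑ z ∈ v.sublists.toFinset, f (x :: z) * TT q z v =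
        ∑ z ∈ v.sublists.toFinset.image (List.cons x), f z * g z := by
      rw [Finset.sum_image (fun a _ b _ h => hi h)]
      simp [g]
    rw [this]
    symm
    refine Finset.sum_subset ?_ ?_
    · intro z hz
      simp only [Finset.mem_image, List.mem_toFinset, List.mem_sublists] at *
      obtain ⟨w, hw, rfl⟩ := hz
      exact hw.cons_cons x
    · intro z _ hz
      simp only [Finset.mem_image, List.mem_toFinset, List.mem_sublists, not_exists, not_and] at hz
      cases z with
      | nil => simp [g]
      | cons a z =>
        by_cases h : a = x
        · subst h
          have := TT_not q z v (fun h => hz z h rfl)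
          simp [g, this]
        · simp [g, h]

lemma TT_add (p q : ℚ) (u v : List A) :
    ∑ z ∈ v.sublists.toFinset, TT p u z * TT q z v = TT (p + q) u v := by
  induction v generalizing u with
  | nil => cases u <;> simp [TT]
  | cons x v ih =>
    rw [sum_cons, ih]
    cases u with
    | nil =>
      simp only [TT, mul_assoc, ← Finset.mul_sum, ih]
      ring
    | cons a u =>
      simp only [TT, add_mul, Finset.sum_add_distrib, mul_assoc, ← Finset.mul_sum, ih]
      split_ifs
      · rw [ih]; ring
      · simp; ring

lemma conv_TT (p q : ℚ) : convW (TT p) (TT q) = (TT (p + q) : List A → List A → ℚ) := by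
  funext u v
  rw [conv_eq _ _ (TT_not p), TT_add]

lemma conj_eq (q r : ℚ) (h : q * r = 1) :
    convW (convW (DW q) PW) (DW r) = (TT r : List A → List A → ℚ) := by
  have hP : (PW : List A → List A → ℚ) = TT 1 := by
    funext u v
    exact PW_eq u v
  have h1 : convW (DW q) PW = fun u v : List A => q ^ u.length * TT 1 u v := by
    funext u v
    rw [conv_eq, hP]
    · by_cases hs : u.Sublist v
      · rw [Finset.sum_eq_single u]
        · simp [DW, deltaW]
        · intro z _ hz
          simp [DW, deltaW, hz.symm]
        · intro hn
          simp [hs] at hn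
      · rw [TT_not 1 u v hs, mul_zero]
        refine Finset.sum_eq_zero fun z hz => ?_
        have : u ≠ z := by
          rintro rfl
          simp at hz
          exact hs hz
        simp [DW, deltaW, this]
    · intro u v hn
      have : u ≠ v := by
        rintro rfl
        exact hn (List.Sublist.refl _)
      simp [DW, deltaW, this]
  rw [h1]
  funext u v
  rw [conv_eq]
  · rw [Finset.sum_eq_single v]
    · have := TT_scale r u v
      simp only [DW, deltaW, if_true, mul_one]
      have e : q ^ u.length * r ^ u.length = 1 := by rw [← mul_pow, h, one_pow]
      linear_combination (-q ^ u.length) * this + TT r u v * e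
    · intro z _ hz
      simp [DW, deltaW, hz]
    · intro hn
      simp at hn
  · intro u v hn
    simp [TT_not 1 u v hn]

lemma pow_eq (d : ℕ) : convPowW PW d = (TT (d : ℚ) : List A → List A → ℚ) := by
  have hP : (PW : List A → List A → ℚ) = TT 1 := by
    funext u v
    exact PW_eq u v
  induction d with
  | zero =>
    funext u v
    simp [convPowW, TT_zero]
  | succ n ih =>
    rw [convPowW, ih, hP, conv_TT]
    push_cast
    rw [add_comm]

end helpers

/-- For every positive natural number `d`, `P^d = D_{1/d} · P · D_d` in `I(A*)`;
in particular the (two-sided) inverse of `P` equals `D_{−1} · P · D_{−1}`. -/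
theorem convPow_PW_eq_conjugate {A : Type*} [Fintype A] [DecidableEq A] :
    (∀ d : ℕ, 0 < d → ∀ u v : List A,
      convPowW PW d u v = convW (convW (DW (1 / (d : ℚ))) PW) (DW (d : ℚ)) u v) ∧
    (∀ u v : List A,
      convW PW (convW (convW (DW (-1)) PW) (DW (-1))) u v = deltaW u v) ∧
    (∀ u v : List A,
      convW (convW (convW (DW (-1)) PW) (DW (-1))) PW u v = deltaW u v) := by
  have hP : (PW : List A → List A → ℚ) = TT 1 := by
    funext u v
    exact PW_eq u v
  refine ⟨?_, ?_, ?_⟩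
  · intro d hd u v
    have : (d : ℚ) ≠ 0 := by exact_mod_cast hd.ne'
    rw [pow_eq, conj_eq _ _ (by field_simp)]
  · intro u v
    rw [conj_eq _ _ (by norm_num), hP, conv_TT, ← TT_zero]
    norm_num
  · intro u v
    rw [conj_eq _ _ (by norm_num), hP, conv_TT, ← TT_zero]
    norm_num
end
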